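/- Let 0 < q < 1, let A := f(-q)f(-q^2)/(q^{1/2} f(-q^5) f(-q^10)) and B_2 := f(-q^2)f(-q^4)/(q f(-q^10) f(-q^20)), and set P := A·B_2 and Q := A/B_2. Then (Q^4 + 1/Q^4) - 3(Q^2 + 1/Q^2) - (P + 5^2/P)(Q + 1/Q) - 12 = 0. -/

import Mathlib

open Real

/-- Ramanujan's theta function `φ(q) = ∑_{n=-∞}^∞ q^(n^2)`. -/
noncomputable def phi (q : ℝ) : ℝ := ∑' n : ℤ, q ^ (n ^ 2)

/-- Ramanujan's theta function `ψ(q) = ∑_{n=0}^∞ q^(n(n+1)/2)`. -/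
noncomputable def psi (q : ℝ) : ℝ := ∑' n : ℕ, q ^ (n * (n + 1) / 2)

/-- `fneg q` is Ramanujan's `f(-q) = ∑_{n=-∞}^∞ (-1)^n q^(n(3n-1)/2)`. -/
noncomputable def fneg (q : ℝ) : ℝ := ∑' n : ℤ, (-1 : ℝ) ^ n * q ^ (n * (3 * n - 1) / 2)

open Filter Topology

/-- The infinite product `∏_{k ≥ 0} (1 - x t^k)`. -/
noncomputable def qPoch (x t : ℝ) : ℝ := ∏' k : ℕ, (1 - x * t ^ k)

/-- The `j`-th term of Ramanujan's theta series `f(a, b)`. -/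
noncomputable def thetaTerm (a b : ℝ) (j : ℤ) : ℝ :=
  a ^ (j * (j + 1) / 2) * b ^ (j * (j - 1) / 2)

/-- Ramanujan's two-variable theta series `f(a, b)`. -/
noncomputable def theta (a b : ℝ) : ℝ := ∑' j : ℤ, thetaTerm a b j

/-- The reciprocal of `∏_{k=1}^{m} (1 - t^k)`, extended by zero to negative `m`. -/
noncomputable def invFactor (t : ℝ) (m : ℤ) : ℝ :=
  if m < 0 then 0 else (∏ k ∈ Finset.range m.toNat, (1 - t * t ^ k))⁻¹

section Products

variable {x t : ℝ}

lemma summable_mul_pow (x : ℝ) (ht0 : 0 < t) (ht1 : t < 1) : Summable fun k : ℕ ↦ x * t ^ k :=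
  (summable_geometric_of_lt_one ht0.le ht1).mul_left x

lemma multipliable_qPoch (x : ℝ) (ht0 : 0 < t) (ht1 : t < 1) :
    Multipliable fun k : ℕ ↦ (1 - x * t ^ k) := by
  simpa [sub_eq_add_neg] using
    multipliable_one_add_of_summable (f := fun k : ℕ ↦ -(x * t ^ k))
      (by simpa using (summable_mul_pow x ht0 ht1).abs)

lemma tendsto_qPoch (x : ℝ) (ht0 : 0 < t) (ht1 : t < 1) :
    Tendsto (fun n : ℕ ↦ ∏ k ∈ Finset.range n, (1 - x * t ^ k)) atTop (𝓝 (qPoch x t)) :=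
  (multipliable_qPoch x ht0 ht1).hasProd.tendsto_prod_nat

lemma mul_pow_lt_one (ht0 : 0 < t) (ht1 : t < 1) (hx0 : 0 < x) (hx1 : x < 1) (k : ℕ) :
    x * t ^ k < 1 :=
  mul_lt_one_of_nonneg_of_lt_one_left hx0.le hx1 (pow_le_one₀ ht0.le ht1.le)

lemma qPoch_pos (ht0 : 0 < t) (ht1 : t < 1) (hx0 : 0 < x) (hx1 : x < 1) : 0 < qPoch x t := by
  have hne : qPoch x t ≠ 0 := by
    have := tprod_one_add_ne_zero_of_summable (f := fun k : ℕ ↦ -(x * t ^ k))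
      (fun k ↦ by have := mul_pow_lt_one ht0 ht1 hx0 hx1 k; intro h; linarith)
      (by simpa using (summable_mul_pow x ht0 ht1).abs)
    simpa [qPoch, sub_eq_add_neg] using this
  refine lt_of_le_of_ne ?_ hne.symm
  refine ge_of_tendsto' (tendsto_qPoch x ht0 ht1) fun n ↦ Finset.prod_nonneg fun k _ ↦ ?_
  linarith [mul_pow_lt_one ht0 ht1 hx0 hx1 k]

lemma qPoch_dissection (x : ℝ) (ht0 : 0 < t) (ht1 : t < 1) {m : ℕ} (hm : m ≠ 0) :
    qPoch x t = ∏ r ∈ Finset.range m, qPoch (x * t ^ r) (t ^ m) := by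
  have h1 : Tendsto (fun n : ℕ ↦ ∏ k ∈ Finset.range (m * n), (1 - x * t ^ k)) atTop
      (𝓝 (qPoch x t)) :=
    (tendsto_qPoch x ht0 ht1).comp (tendsto_id.const_mul_atTop' (Nat.pos_of_ne_zero hm))
  have h2 : Tendsto (fun n : ℕ ↦ ∏ r ∈ Finset.range m, ∏ k ∈ Finset.range n,
      (1 - x * t ^ r * (t ^ m) ^ k)) atTop
      (𝓝 (∏ r ∈ Finset.range m, qPoch (x * t ^ r) (t ^ m))) :=
    tendsto_finsetProd _ fun r _ ↦
      tendsto_qPoch _ (pow_pos ht0 m) (pow_lt_one₀ ht0.le ht1 hm)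
  refine tendsto_nhds_unique h1 (h2.congr fun n ↦ ?_)
  induction n with
  | zero => simp
  | succ n ih =>
    rw [Nat.mul_succ, Finset.prod_range_add, ← ih, ← Finset.prod_mul_distrib]
    refine Finset.prod_congr rfl fun r _ ↦ ?_
    rw [Finset.prod_range_succ, ← pow_mul, pow_add]
    ring

lemma qPoch_neg_mul (x : ℝ) (ht0 : 0 < t) (ht1 : t < 1) :
    qPoch (-x) t * qPoch x t = qPoch (x ^ 2) (t ^ 2) := by
  rw [qPoch, qPoch, qPoch, ← (multipliable_qPoch _ ht0 ht1).tprod_mul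
    (multipliable_qPoch _ ht0 ht1)]
  refine tprod_congr fun k ↦ ?_
  rw [← pow_mul, mul_comm 2 k, pow_mul]
  ring

lemma qPoch_succ (x : ℝ) (ht0 : 0 < t) (ht1 : t < 1) :
    qPoch x t = (1 - x) * qPoch (x * t) t := by
  have h1 := (tendsto_qPoch x ht0 ht1).comp (tendsto_add_atTop_nat 1)
  have h2 := (tendsto_qPoch (x * t) ht0 ht1).const_mul (1 - x)
  refine tendsto_nhds_unique h1 (h2.congr fun n ↦ ?_)
  simp [Finset.prod_range_succ', pow_succ]
  rw [mul_comm]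
  congr 1
  refine Finset.prod_congr rfl fun k _ ↦ ?_
  ring

end Products

section TripleProduct

variable {a b : ℝ}

lemma two_mul_tri (j : ℤ) : 2 * (j * (j + 1) / 2) = j * (j + 1) :=
  Int.mul_ediv_cancel' (Int.even_mul_succ_self j).two_dvd

lemma two_mul_tri_pred (j : ℤ) : 2 * (j * (j - 1) / 2) = j * (j - 1) :=
  Int.mul_ediv_cancel' (Int.even_mul_pred_self j).two_dvd

lemma thetaTerm_succ (ha : a ≠ 0) (hb : b ≠ 0) (j : ℤ) :
    thetaTerm a b (j + 1) = thetaTerm a b j * (a * (a * b) ^ j) := by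
  have h1 : (j + 1) * (j + 1 + 1) / 2 = j * (j + 1) / 2 + (j + 1) := by
    linarith [two_mul_tri j, two_mul_tri (j + 1)]
  have h2 : (j + 1) * (j + 1 - 1) / 2 = j * (j - 1) / 2 + j := by
    linarith [two_mul_tri_pred j, two_mul_tri_pred (j + 1)]
  rw [thetaTerm, thetaTerm, h1, h2, zpow_add₀ ha, zpow_add₀ hb, zpow_add_one₀ ha, mul_zpow]
  ring

lemma thetaTerm_neg (a b : ℝ) (j : ℤ) : thetaTerm a b (-j) = thetaTerm b a j := by
  rw [thetaTerm, thetaTerm, mul_comm]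
  ring_nf

lemma thetaTerm_ne_zero (ha : a ≠ 0) (hb : b ≠ 0) (j : ℤ) : thetaTerm a b j ≠ 0 :=
  mul_ne_zero (zpow_ne_zero _ ha) (zpow_ne_zero _ hb)

lemma summable_norm_thetaTerm_nat (ha : a ≠ 0) (hb : b ≠ 0) (h0 : 0 < a * b) (h1 : a * b < 1) :
    Summable fun n : ℕ ↦ ‖thetaTerm a b n‖ := by
  refine summable_of_ratio_test_tendsto_lt_one (l := 0) one_pos
    (Eventually.of_forall fun n ↦ norm_ne_zero_iff.2 (thetaTerm_ne_zero ha hb n)) ?_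
  have : Tendsto (fun n : ℕ ↦ |a| * (a * b) ^ n) atTop (𝓝 (|a| * 0)) :=
    (tendsto_pow_atTop_nhds_zero_of_lt_one h0.le h1).const_mul _
  rw [mul_zero] at this
  refine this.congr fun n ↦ ?_
  have hne := norm_ne_zero_iff.2 (thetaTerm_ne_zero ha hb n)
  rw [norm_norm, norm_norm, Nat.cast_succ, thetaTerm_succ ha hb, norm_mul,
    mul_div_cancel_left₀ _ hne, norm_mul, zpow_natCast, Real.norm_eq_abs, norm_pow,
    Real.norm_of_nonneg h0.le]

lemma summable_norm_thetaTerm (ha : a ≠ 0) (hb : b ≠ 0) (h0 : 0 < a * b) (h1 : a * b < 1) :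
    Summable fun j : ℤ ↦ ‖thetaTerm a b j‖ := by
  refine Summable.of_nat_of_neg (summable_norm_thetaTerm_nat ha hb h0 h1) ?_
  simp only [thetaTerm_neg]
  exact summable_norm_thetaTerm_nat hb ha (by rwa [mul_comm]) (by rwa [mul_comm])

variable {t : ℝ}

lemma invFactor_sub_one (ht0 : 0 < t) (ht1 : t < 1) (m : ℤ) :
    invFactor t (m - 1) = (1 - t ^ m) * invFactor t m := by
  rcases lt_trichotomy m 0 with h | rfl | h
  · simp [invFactor, h, show m - 1 < 0 by omega]
  · simp [invFactor]
  · obtain ⟨n, rfl⟩ : ∃ n : ℕ, m = n + 1 := ⟨(m - 1).toNat, by omega⟩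
    have hne : 1 - t ^ (n + 1) ≠ 0 := by
      have := pow_lt_one₀ ht0.le ht1 (n.add_one_ne_zero)
      linarith
    have h3 : (((n : ℤ) + 1).toNat) = n + 1 := by omega
    simp only [invFactor, add_sub_cancel_right, h3, Int.toNat_natCast,
      show ¬ ((n : ℤ) < 0) by omega, show ¬ ((n : ℤ) + 1 < 0) by omega, if_false,
      Finset.prod_range_succ]
    rw [← pow_succ', show t ^ ((n : ℤ) + 1) = t ^ (n + 1) by exact_mod_cast zpow_natCast t (n + 1),
      mul_inv, mul_left_comm, mul_inv_cancel₀ hne, mul_one]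

lemma prod_ge_qPoch (ht0 : 0 < t) (ht1 : t < 1) (n : ℕ) :
    qPoch t t ≤ ∏ k ∈ Finset.range n, (1 - t * t ^ k) := by
  have hanti : Antitone fun n : ℕ ↦ ∏ k ∈ Finset.range n, (1 - t * t ^ k) := by
    refine antitone_nat_of_succ_le fun n ↦ ?_
    rw [Finset.prod_range_succ]
    refine mul_le_of_le_one_right (Finset.prod_nonneg fun k _ ↦ ?_) ?_
    · linarith [mul_pow_lt_one ht0 ht1 ht0 ht1 k]
    · linarith [mul_pos ht0 (pow_pos ht0 n)]
  exact hanti.le_of_tendsto (tendsto_qPoch t ht0 ht1) n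

lemma invFactor_nonneg (ht0 : 0 < t) (ht1 : t < 1) (m : ℤ) : 0 ≤ invFactor t m := by
  rw [invFactor]
  split_ifs
  · rfl
  · exact inv_nonneg.2 ((qPoch_pos ht0 ht1 ht0 ht1).le.trans (prod_ge_qPoch ht0 ht1 _))

lemma invFactor_le (ht0 : 0 < t) (ht1 : t < 1) (m : ℤ) : invFactor t m ≤ (qPoch t t)⁻¹ := by
  have hpos := qPoch_pos ht0 ht1 ht0 ht1
  rw [invFactor]
  split_ifs
  · exact inv_nonneg.2 hpos.le
  · exact inv_anti₀ hpos (prod_ge_qPoch ht0 ht1 _)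

lemma tendsto_invFactor (ht0 : 0 < t) (ht1 : t < 1) {u : ℕ → ℤ} (hu : Tendsto u atTop atTop) :
    Tendsto (fun n ↦ invFactor t (u n)) atTop (𝓝 (qPoch t t)⁻¹) := by
  have hu' : Tendsto (fun n ↦ (u n).toNat) atTop atTop := by
    refine tendsto_atTop.2 fun N ↦ ?_
    filter_upwards [hu.eventually_ge_atTop (N : ℤ)] with n hn
    omega
  refine (((tendsto_qPoch t ht0 ht1).comp hu').inv₀ (qPoch_pos ht0 ht1 ht0 ht1).ne').congr' ?_
  filter_upwards [hu.eventually_ge_atTop 0] with n hn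
  simp [invFactor, not_lt.2 hn]

/-- The finite form of Jacobi's triple product identity. -/
lemma hasSum_finite_triple_product (ha : a ≠ 0) (hb : b ≠ 0) (h0 : 0 < a * b) (h1 : a * b < 1)
    (n : ℕ) :
    HasSum (fun j : ℤ ↦ (∏ k ∈ Finset.range (2 * n), (1 - a * b * (a * b) ^ k)) *
        invFactor (a * b) (n + j) * invFactor (a * b) (n - j) * thetaTerm a b j)
      (∏ k ∈ Finset.range n, ((1 - -a * (a * b) ^ k) * (1 - -b * (a * b) ^ k))) := by
  induction n with
  | zero =>
    rw [Finset.prod_range_zero]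
    refine (congrArg (HasSum · _) (funext fun j ↦ ?_)).mpr (hasSum_ite_eq (0 : ℤ) (1 : ℝ))
    by_cases hj : j = 0
    · simp [hj, invFactor, thetaTerm]
    · rcases lt_or_gt_of_ne hj with h | h <;> simp [invFactor, hj, h]
  | succ n ih =>
    have hA := ((Equiv.subRight (1 : ℤ)).hasSum_iff.2 ih).mul_left (a * (a * b) ^ n)
    have hB := ((Equiv.addRight (1 : ℤ)).hasSum_iff.2 ih).mul_left (b * (a * b) ^ n)
    have hC := ih.mul_left (1 + (a * b) ^ (2 * n + 1))
    have hval : (∏ k ∈ Finset.range (n + 1), ((1 - -a * (a * b) ^ k) * (1 - -b * (a * b) ^ k))) =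
        a * (a * b) ^ n * ∏ k ∈ Finset.range n, ((1 - -a * (a * b) ^ k) * (1 - -b * (a * b) ^ k)) +
        b * (a * b) ^ n * ∏ k ∈ Finset.range n, ((1 - -a * (a * b) ^ k) * (1 - -b * (a * b) ^ k)) +
        (1 + (a * b) ^ (2 * n + 1)) *
          ∏ k ∈ Finset.range n, ((1 - -a * (a * b) ^ k) * (1 - -b * (a * b) ^ k)) := by
      rw [Finset.prod_range_succ]
      ring
    rw [hval]
    refine (congrArg (HasSum · _) (funext fun j ↦ ?_)).mpr ((hA.add hB).add hC)
    simp only [Function.comp, Equiv.subRight_apply, Equiv.coe_addRight]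
    have ht := h0.ne'
    have hT1 : thetaTerm a b j = thetaTerm a b (j - 1) * (a * (a * b) ^ (j - 1)) := by
      have := thetaTerm_succ ha hb (j - 1)
      rwa [sub_add_cancel] at this
    have hT2 := thetaTerm_succ ha hb j
    have e1 := invFactor_sub_one h0 h1 (n + j + 1)
    have e2 := invFactor_sub_one h0 h1 (n + j)
    have e3 := invFactor_sub_one h0 h1 (n - j + 1)
    have e4 := invFactor_sub_one h0 h1 (n - j)
    rw [add_sub_cancel_right] at e1 e3
    have f1 : ((n + 1 : ℕ) : ℤ) + j = n + j + 1 := by push_cast; ring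
    have f2 : ((n + 1 : ℕ) : ℤ) - j = n - j + 1 := by push_cast; ring
    have f3 : (n : ℤ) + (j - 1) = n + j - 1 := by ring
    have f4 : (n : ℤ) - (j - 1) = n - j + 1 := by ring
    have f5 : (n : ℤ) + (j + 1) = n + j + 1 := by ring
    have f6 : (n : ℤ) - (j + 1) = n - j - 1 := by ring
    rw [f1, f2, f3, f4, f5, f6, e2, e4, e1, e3]
    have g1 : a * (a * b) ^ n * thetaTerm a b (j - 1)
        = (a * b) ^ ((n : ℤ) - j + 1) * thetaTerm a b j := by
      rw [hT1, show (n : ℤ) - j + 1 = n - (j - 1) by ring, zpow_sub₀ ht, zpow_natCast]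
      field_simp
    have g2 : b * (a * b) ^ n * thetaTerm a b (j + 1)
        = (a * b) ^ ((n : ℤ) + j + 1) * thetaTerm a b j := by
      rw [hT2, zpow_add₀ ht, zpow_add₀ ht, zpow_natCast, zpow_one]
      ring
    rw [show 2 * (n + 1) = 2 * n + 1 + 1 by ring, Finset.prod_range_succ,
      Finset.prod_range_succ]
    have hx : (a * b) ^ ((n : ℤ) + j + 1) = (a * b) ^ ((n : ℤ) + j) * (a * b) :=
      zpow_add_one₀ ht _
    have hy : (a * b) ^ ((n : ℤ) - j + 1) = (a * b) ^ ((n : ℤ) - j) * (a * b) :=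
      zpow_add_one₀ ht _
    have hxy : (a * b) ^ ((n : ℤ) + j) * (a * b) ^ ((n : ℤ) - j) = (a * b) ^ (2 * n) := by
      rw [← zpow_add₀ ht, ← zpow_natCast]
      congr 1
      push_cast
      ring
    rw [pow_succ (a * b) (2 * n), ← hxy]
    rw [hx] at g2 ⊢
    rw [hy] at g1 ⊢
    generalize (a * b) ^ ((n : ℤ) + j) = X at *
    generalize (a * b) ^ ((n : ℤ) - j) = Y at *
    generalize (∏ k ∈ Finset.range (2 * n), (1 - a * b * (a * b) ^ k)) = D at *
    generalize invFactor (a * b) (n + j + 1) = I at *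
    generalize invFactor (a * b) (n - j + 1) = J at *
    linear_combination (-D * I * J * (1 - X) * (1 - X * (a * b))) * g1
      + (-D * I * J * (1 - Y) * (1 - Y * (a * b))) * g2

/-- Jacobi's triple product identity. -/
theorem theta_eq_qPoch (ha : a ≠ 0) (hb : b ≠ 0) (h0 : 0 < a * b) (h1 : a * b < 1) :
    theta a b = qPoch (-a) (a * b) * qPoch (-b) (a * b) * qPoch (a * b) (a * b) := by
  have hpos := qPoch_pos h0 h1 h0 h1
  set E := qPoch (a * b) (a * b) with hE
  have hlim : Tendsto (fun n : ℕ ↦ ∑' j : ℤ,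
      (∏ k ∈ Finset.range (2 * n), (1 - a * b * (a * b) ^ k)) *
        invFactor (a * b) (n + j) * invFactor (a * b) (n - j) * thetaTerm a b j) atTop
      (𝓝 (∑' j : ℤ, E * E⁻¹ * E⁻¹ * thetaTerm a b j)) := by
    refine tendsto_tsum_of_dominated_convergence
      (bound := fun j ↦ 1 * E⁻¹ * E⁻¹ * ‖thetaTerm a b j‖)
      ((summable_norm_thetaTerm ha hb h0 h1).mul_left _) (fun j ↦ ?_) ?_
    · refine Tendsto.mul_const _ (Tendsto.mul (Tendsto.mul ?_ ?_) ?_)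
      · exact (tendsto_qPoch _ h0 h1).comp (tendsto_id.const_mul_atTop' two_pos)
      · exact tendsto_invFactor h0 h1
          (tendsto_atTop_add_const_right _ _ tendsto_natCast_atTop_atTop)
      · exact tendsto_invFactor h0 h1
          (tendsto_atTop_add_const_right _ _ tendsto_natCast_atTop_atTop)
    · refine Eventually.of_forall fun n j ↦ ?_
      have hD0 : 0 ≤ ∏ k ∈ Finset.range (2 * n), (1 - a * b * (a * b) ^ k) :=
        hpos.le.trans (prod_ge_qPoch h0 h1 _)
      have hD1 : ∏ k ∈ Finset.range (2 * n), (1 - a * b * (a * b) ^ k) ≤ 1 :=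
        Finset.prod_le_one (fun k _ ↦ by linarith [mul_pow_lt_one h0 h1 h0 h1 k])
          (fun k _ ↦ by linarith [mul_pos h0 (pow_pos h0 k)])
      have i1 := invFactor_nonneg h0 h1 (n + j)
      have i2 := invFactor_nonneg h0 h1 (n - j)
      rw [norm_mul, Real.norm_of_nonneg (by positivity)]
      gcongr
      · exact invFactor_le h0 h1 _
      · exact invFactor_le h0 h1 _
  have hprod : Tendsto (fun n : ℕ ↦ ∏ k ∈ Finset.range n,
      ((1 - -a * (a * b) ^ k) * (1 - -b * (a * b) ^ k))) atTop
      (𝓝 (qPoch (-a) (a * b) * qPoch (-b) (a * b))) := by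
    simp only [Finset.prod_mul_distrib]
    exact (tendsto_qPoch _ h0 h1).mul (tendsto_qPoch _ h0 h1)
  have key := tendsto_nhds_unique hlim
    (hprod.congr fun n ↦ (hasSum_finite_triple_product ha hb h0 h1 n).tsum_eq.symm)
  rw [tsum_mul_left, mul_inv_cancel₀ hpos.ne', one_mul] at key
  rw [theta, ← key]
  field_simp

end TripleProduct

section Lattice

/-- The sum of `F` over the coset `x + 2y ≡ r (mod 5)` of the lattice generated by `2 - i`. -/
lemma tsum_coset (F : ℤ × ℤ → ℝ) (r : ℤ) :
    ∑' z : ℤ × ℤ, (if (z.1 + 2 * z.2 - r) % 5 = 0 then F z else 0) =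
      ∑' w : ℤ × ℤ, F (2 * w.1 + w.2 + r, 2 * w.2 - w.1) := by
  let g : ℤ × ℤ → ℤ × ℤ := fun w ↦ (2 * w.1 + w.2 + r, 2 * w.2 - w.1)
  have hg : Function.Injective g := by
    rintro ⟨m, n⟩ ⟨m', n'⟩ h
    simp only [g, Prod.mk.injEq] at h ⊢
    omega
  rw [← hg.tsum_eq]
  · refine tsum_congr fun w ↦ if_pos ?_
    simp only [g]
    omega
  · rintro ⟨x, y⟩ hz
    have h5 : (x + 2 * y - r) % 5 = 0 := by
      by_contra h
      exact hz (if_neg h)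
    refine ⟨((2 * (x - r) - y) / 5, (x - r + 2 * y) / 5), ?_⟩
    simp only [g, Prod.mk.injEq]
    omega

/-- A summable function on `ℤ²` invariant under the quarter turn `(x, y) ↦ (-y - s, x)` splits over
the cosets of the lattice generated by `2 - i`, one coset being fixed and the others permuted. -/
lemma tsum_quarter_turn (F : ℤ × ℤ → ℝ) (hF : Summable F) {s u : ℤ} (hsu : u = s + 1 ∨ s = u + 1)
    (hinv : ∀ x y : ℤ, F (-y - s, x) = F (x, y)) :
    ∑' z, F z = ∑' w : ℤ × ℤ, F (2 * w.1 + w.2 + s, 2 * w.2 - w.1) +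
      4 * ∑' w : ℤ × ℤ, F (2 * w.1 + w.2 + u, 2 * w.2 - w.1) := by
  let G : ℤ → ℤ × ℤ → ℝ := fun r z ↦ if (z.1 + 2 * z.2 - r) % 5 = 0 then F z else 0
  have hG : ∀ r, Summable (G r) := fun r ↦
    Summable.of_norm_bounded hF.norm fun z ↦ by
      simp only [G]
      split_ifs <;> simp
  let e : ℤ × ℤ ≃ ℤ × ℤ :=
    { toFun := fun z ↦ (-z.2 - s, z.1)
      invFun := fun z ↦ (z.2, -z.1 - s)
      left_inv := fun z ↦ by ext <;> simp
      right_inv := fun z ↦ by ext <;> simp }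
  have hturn : ∀ r r' : ℤ, (r' - (2 * r - s)) % 5 = 0 → ∑' z, G r' z = ∑' z, G r z := by
    intro r r' h
    rw [← e.tsum_eq]
    refine tsum_congr fun z ↦ ?_
    have hiff : (-z.2 - s + 2 * z.1 - r') % 5 = 0 ↔ (z.1 + 2 * z.2 - r) % 5 = 0 := by omega
    simp only [G, e, Equiv.coe_fn_mk, hiff, hinv z.1 z.2]
  have hsplit : ∀ z, F z = G s z + (G u z + G (2 * u - s) z + G (4 * u - 3 * s) z +
      G (3 * u - 2 * s) z) := by
    intro z
    have hcases : (z.1 + 2 * z.2 - s) % 5 = 0 ∨ (z.1 + 2 * z.2 - s) % 5 = 1 ∨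
      (z.1 + 2 * z.2 - s) % 5 = 2 ∨ (z.1 + 2 * z.2 - s) % 5 = 3 ∨
      (z.1 + 2 * z.2 - s) % 5 = 4 := by omega
    simp only [G]
    generalize z.1 + 2 * z.2 = c at *
    rcases hsu with rfl | rfl <;> rcases hcases with h | h | h | h | h <;>
      split_ifs <;> first | omega | simp
  rw [tsum_congr hsplit, ((hG _)).tsum_add ((((hG _).add (hG _)).add (hG _)).add (hG _)),
    (((hG _).add (hG _)).add (hG _)).tsum_add (hG _), ((hG _).add (hG _)).tsum_add (hG _),
    (hG _).tsum_add (hG _), hturn (4 * u - 3 * s) (3 * u - 2 * s) (by omega),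
    hturn (2 * u - s) (4 * u - 3 * s) (by omega), hturn u (2 * u - s) (by omega)]
  simp only [G, tsum_coset]
  ring

end Lattice

section ThetaIdentities

variable {p : ℝ}

lemma thetaTerm_pow (hp : p ≠ 0) (k l : ℕ) (j : ℤ) :
    thetaTerm (p ^ k) (p ^ l) j = p ^ (k * (j * (j + 1) / 2) + l * (j * (j - 1) / 2)) := by
  rw [thetaTerm, zpow_add₀ hp, zpow_mul, zpow_mul, zpow_natCast, zpow_natCast]

lemma summable_norm_thetaTerm_pow (hp : p ≠ 0) (hp1 : |p| < 1) {k l : ℕ}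
    (hpos : 0 < p ^ (k + l)) (hkl : k + l ≠ 0) :
    Summable fun j : ℤ ↦ ‖thetaTerm (p ^ k) (p ^ l) j‖ := by
  refine summable_norm_thetaTerm (pow_ne_zero _ hp) (pow_ne_zero _ hp) ?_ ?_ <;> rw [← pow_add]
  · exact hpos
  · rw [← abs_of_pos hpos, abs_pow]
    exact pow_lt_one₀ (abs_nonneg p) hp1 hkl

lemma theta_mul_theta {a b c d : ℝ} (h1 : Summable fun j ↦ ‖thetaTerm a b j‖)
    (h2 : Summable fun j ↦ ‖thetaTerm c d j‖) :
    theta a b * theta c d = ∑' z : ℤ × ℤ, thetaTerm a b z.1 * thetaTerm c d z.2 :=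
  tsum_mul_tsum_of_summable_norm h1 h2

/-- `φ(p)² = φ(p⁵)² + 4p f(p, p⁹) f(p³, p⁷)`. -/
theorem theta_self_sq (hp : p ≠ 0) (hp1 : |p| < 1) :
    theta p p ^ 2 =
      theta (p ^ 5) (p ^ 5) ^ 2 + 4 * (p * (theta (p ^ 9) p * theta (p ^ 7) (p ^ 3))) := by
  have hsum : ∀ k l : ℕ, Even (k + l) → k + l ≠ 0 →
      Summable fun j : ℤ ↦ ‖thetaTerm (p ^ k) (p ^ l) j‖ := fun k l he h ↦
    summable_norm_thetaTerm_pow hp hp1 (he.pow_pos hp) h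
  have s1 := hsum 1 1 (by decide) (by decide)
  have s5 := hsum 5 5 (by decide) (by decide)
  have s9 := hsum 9 1 (by decide) (by decide)
  have s7 := hsum 7 3 (by decide) (by decide)
  have key := tsum_quarter_turn
    (fun z ↦ thetaTerm (p ^ 1) (p ^ 1) z.1 * thetaTerm (p ^ 1) (p ^ 1) z.2)
    (summable_mul_of_summable_norm s1 s1) (s := 0) (u := 1) (by simp) (fun x y ↦ by
      rw [sub_zero, thetaTerm_neg, mul_comm])
  have e1 := theta_mul_theta s1 s1
  have e5 := theta_mul_theta s5 s5
  have e9 := theta_mul_theta s9 s7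
  have t5 : ∀ w : ℤ × ℤ, thetaTerm (p ^ 1) (p ^ 1) (2 * w.1 + w.2 + 0) *
      thetaTerm (p ^ 1) (p ^ 1) (2 * w.2 - w.1) =
      thetaTerm (p ^ 5) (p ^ 5) w.1 * thetaTerm (p ^ 5) (p ^ 5) w.2 := by
    rintro ⟨m, n⟩
    simp only [thetaTerm_pow hp, ← zpow_add₀ hp]
    congr 1
    push_cast
    linarith [two_mul_tri m, two_mul_tri n, two_mul_tri_pred m, two_mul_tri_pred n,
      two_mul_tri (2 * m + n + 0), two_mul_tri_pred (2 * m + n + 0), two_mul_tri (2 * n - m),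
      two_mul_tri_pred (2 * n - m)]
  have t9 : ∀ w : ℤ × ℤ, thetaTerm (p ^ 1) (p ^ 1) (2 * w.1 + w.2 + 1) *
      thetaTerm (p ^ 1) (p ^ 1) (2 * w.2 - w.1) =
      p * (thetaTerm (p ^ 9) (p ^ 1) w.1 * thetaTerm (p ^ 7) (p ^ 3) w.2) := by
    rintro ⟨m, n⟩
    simp only [thetaTerm_pow hp, ← zpow_add₀ hp, ← zpow_one_add₀ hp]
    congr 1
    push_cast
    linarith [two_mul_tri m, two_mul_tri n, two_mul_tri_pred m, two_mul_tri_pred n,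
      two_mul_tri (2 * m + n + 1), two_mul_tri_pred (2 * m + n + 1), two_mul_tri (2 * n - m),
      two_mul_tri_pred (2 * n - m)]
  rw [← e1, tsum_congr t5, tsum_congr t9, tsum_mul_left, ← e5, ← e9] at key
  simpa only [pow_one, sq] using key

/-- `ψ(p)² = pψ(p⁵)² + f(p, p⁴) f(p², p³)`, where `f(p, 1) = 2ψ(p)`. -/
theorem theta_one_sq (hp : 0 < p) (hp1 : p < 1) :
    theta p 1 ^ 2 = p * theta (p ^ 5) 1 ^ 2 + 4 * (theta (p ^ 3) (p ^ 2) * theta (p ^ 4) p) := by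
  have hp0 := hp.ne'
  have hsum : ∀ k l : ℕ, k + l ≠ 0 →
      Summable fun j : ℤ ↦ ‖thetaTerm (p ^ k) (p ^ l) j‖ := fun k l h ↦
    summable_norm_thetaTerm_pow hp0 (by rwa [abs_of_pos hp]) (pow_pos hp _) h
  have s1 := hsum 1 0 (by decide)
  have s5 := hsum 5 0 (by decide)
  have s3 := hsum 3 2 (by decide)
  have s4 := hsum 4 1 (by decide)
  have key := tsum_quarter_turn
    (fun z ↦ thetaTerm (p ^ 1) (p ^ 0) z.1 * thetaTerm (p ^ 1) (p ^ 0) z.2)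
    (summable_mul_of_summable_norm s1 s1) (s := 1) (u := 0) (by simp) (fun x y ↦ by
      simp only [thetaTerm_pow hp0, ← zpow_add₀ hp0]
      congr 1
      push_cast
      linarith [two_mul_tri (-y - 1), two_mul_tri y])
  have e1 := theta_mul_theta s1 s1
  have e5 := theta_mul_theta s5 s5
  have e3 := theta_mul_theta s3 s4
  have t5 : ∀ w : ℤ × ℤ, thetaTerm (p ^ 1) (p ^ 0) (2 * w.1 + w.2 + 1) *
      thetaTerm (p ^ 1) (p ^ 0) (2 * w.2 - w.1) =
      p * (thetaTerm (p ^ 5) (p ^ 0) w.1 * thetaTerm (p ^ 5) (p ^ 0) w.2) := by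
    rintro ⟨m, n⟩
    simp only [thetaTerm_pow hp0, ← zpow_add₀ hp0, ← zpow_one_add₀ hp0]
    congr 1
    push_cast
    linarith [two_mul_tri m, two_mul_tri n, two_mul_tri (2 * m + n + 1), two_mul_tri (2 * n - m)]
  have t3 : ∀ w : ℤ × ℤ, thetaTerm (p ^ 1) (p ^ 0) (2 * w.1 + w.2 + 0) *
      thetaTerm (p ^ 1) (p ^ 0) (2 * w.2 - w.1) =
      thetaTerm (p ^ 3) (p ^ 2) w.1 * thetaTerm (p ^ 4) (p ^ 1) w.2 := by
    rintro ⟨m, n⟩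
    simp only [thetaTerm_pow hp0, ← zpow_add₀ hp0]
    congr 1
    push_cast
    linarith [two_mul_tri m, two_mul_tri n, two_mul_tri_pred m, two_mul_tri_pred n,
      two_mul_tri (2 * m + n + 0), two_mul_tri (2 * n - m)]
  rw [← e1, tsum_congr t5, tsum_congr t3, tsum_mul_left, ← e5, ← e3] at key
  simpa only [pow_one, pow_zero, sq] using key

end ThetaIdentities

section EtaQuotients

variable {q : ℝ}

lemma fneg_eq_qPoch (h0 : 0 < q) (h1 : q < 1) : fneg q = qPoch q q := by
  have hq3 : -q * -q ^ 2 = q ^ 3 := by ring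
  have hth : fneg q = theta (-q) (-q ^ 2) := by
    refine tsum_congr fun n ↦ ?_
    have hm : ∀ x : ℝ, -x = -1 * x := fun x ↦ by ring
    rw [thetaTerm, hm q, hm (q ^ 2), mul_zpow, mul_zpow, mul_mul_mul_comm,
      ← zpow_add₀ (by norm_num), ← zpow_natCast, ← zpow_mul, ← zpow_add₀ h0.ne']
    have e : 2 * (n * (3 * n - 1) / 2) = n * (3 * n - 1) :=
      Int.mul_ediv_cancel' (by
        rw [show n * (3 * n - 1) = n * (n - 1) + 2 * (n * n) by ring]
        exact dvd_add (Int.even_mul_pred_self n).two_dvd (dvd_mul_right _ _))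
    have e1 := two_mul_tri n
    have e2 := two_mul_tri_pred n
    congr 1
    · rw [show n * (n + 1) / 2 + n * (n - 1) / 2 = n * n by linarith]
      rcases Int.even_or_odd n with h | h
      · rw [h.neg_one_zpow, (h.mul_left n).neg_one_zpow]
      · rw [h.neg_one_zpow, (h.mul h).neg_one_zpow]
    · congr 1
      push_cast
      linarith
  have hpos : 0 < -q * -q ^ 2 := by rw [hq3]; positivity
  rw [hth, theta_eq_qPoch (by simpa using h0.ne') (by simpa using h0.ne') hpos
    (by rw [hq3]; exact pow_lt_one₀ h0.le h1 (by decide)), hq3,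
    qPoch_dissection q h0 h1 (m := 3) (by decide)]
  simp [Finset.prod_range_succ, ← pow_succ', neg_neg]

lemma fneg_pos (h0 : 0 < q) (h1 : q < 1) : 0 < fneg q := by
  rw [fneg_eq_qPoch h0 h1]
  exact qPoch_pos h0 h1 h0 h1

lemma qPoch_neg_self (h0 : 0 < q) (h1 : q < 1) : qPoch (-q) q = fneg (q ^ 2) / fneg q := by
  rw [eq_div_iff (fneg_pos h0 h1).ne', fneg_eq_qPoch h0 h1,
    fneg_eq_qPoch (pow_pos h0 2) (pow_lt_one₀ h0.le h1 (by decide)), qPoch_neg_mul q h0 h1]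

lemma qPoch_self_sq (h0 : 0 < q) (h1 : q < 1) : qPoch q (q ^ 2) = fneg q / fneg (q ^ 2) := by
  have h2 := pow_lt_one₀ h0.le h1 two_ne_zero
  rw [eq_div_iff (fneg_pos (pow_pos h0 2) h2).ne', fneg_eq_qPoch h0 h1,
    fneg_eq_qPoch (pow_pos h0 2) h2, qPoch_dissection q h0 h1 two_ne_zero]
  simp [Finset.prod_range_succ, ← pow_succ']

lemma theta_one_eq (h0 : 0 < q) (h1 : q < 1) : theta q 1 = 2 * fneg (q ^ 2) ^ 2 / fneg q := by
  have hne := (fneg_pos h0 h1).ne'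
  rw [theta_eq_qPoch h0.ne' one_ne_zero (by simpa) (by simpa), mul_one,
    qPoch_succ (-1) h0 h1, neg_one_mul, qPoch_neg_self h0 h1, ← fneg_eq_qPoch h0 h1]
  field_simp
  ring

lemma theta_neg_eq (h0 : 0 < q) (h1 : q < 1) :
    theta (-q) (-q) = fneg q ^ 2 / fneg (q ^ 2) := by
  have h2 := pow_lt_one₀ h0.le h1 two_ne_zero
  have hne := (fneg_pos (pow_pos h0 2) h2).ne'
  have hq2 : -q * -q = q ^ 2 := by ring
  rw [theta_eq_qPoch (neg_ne_zero.2 h0.ne') (neg_ne_zero.2 h0.ne') (by rw [hq2]; positivity)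
    (by rwa [hq2]), hq2, neg_neg, qPoch_self_sq h0 h1, ← fneg_eq_qPoch (pow_pos h0 2) h2]
  field_simp

lemma theta_mul_theta_five (h0 : 0 < q) (h1 : q < 1) :
    theta (q ^ 3) (q ^ 2) * theta (q ^ 4) q =
      fneg (q ^ 2) * fneg (q ^ 5) ^ 3 / (fneg q * fneg (q ^ 10)) := by
  have hlt : ∀ {n : ℕ}, n ≠ 0 → q ^ n < 1 := pow_lt_one₀ h0.le h1
  have hE : ∀ n : ℕ, n ≠ 0 → 0 < fneg (q ^ n) := fun n hn ↦ fneg_pos (pow_pos h0 n) (hlt hn)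
  have hE1 := fneg_pos h0 h1
  have hE5 := hE 5 (by decide)
  have hE10 := hE 10 (by decide)
  have hd := qPoch_dissection (-q) h0 h1 (m := 5) (by decide)
  have h5 := qPoch_neg_self (pow_pos h0 5) (hlt (n := 5) (by decide))
  rw [← pow_mul] at h5
  simp only [Finset.prod_range_succ, Finset.prod_range_zero, one_mul,
    neg_mul, ← pow_succ', Nat.reduceAdd, Nat.reduceMul, qPoch_neg_self h0 h1] at hd h5
  rw [h5] at hd
  have e32 : q ^ 3 * q ^ 2 = q ^ 5 := by ring
  have e41 : q ^ 4 * q = q ^ 5 := by ring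
  have hq5 := hlt (n := 5) (by decide)
  rw [theta_eq_qPoch (by positivity) (by positivity) (by positivity) (by rwa [e32]),
    theta_eq_qPoch (by positivity) (by positivity) (by positivity) (by rwa [e41]), e32, e41,
    ← fneg_eq_qPoch (pow_pos h0 5) hq5]
  simp only [pow_one] at hd
  field_simp at hd ⊢
  linear_combination -hd

lemma theta_mul_theta_ten (h0 : 0 < q) (h1 : q < 1) :
    theta (-q ^ 9) (-q) * theta (-q ^ 7) (-q ^ 3) =
      fneg q * fneg (q ^ 10) ^ 3 / (fneg (q ^ 2) * fneg (q ^ 5)) := by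
  have hlt : ∀ {n : ℕ}, n ≠ 0 → q ^ n < 1 := pow_lt_one₀ h0.le h1
  have hE : ∀ n : ℕ, n ≠ 0 → 0 < fneg (q ^ n) := fun n hn ↦ fneg_pos (pow_pos h0 n) (hlt hn)
  have hE2 := hE 2 (by decide)
  have hE5 := hE 5 (by decide)
  have hE10 := hE 10 (by decide)
  have hd := qPoch_dissection q (pow_pos h0 2) (hlt (n := 2) (by decide)) (m := 5) (by decide)
  have h5 := qPoch_self_sq (pow_pos h0 5) (hlt (n := 5) (by decide))
  rw [qPoch_self_sq h0 h1] at hd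
  simp only [← pow_mul, Finset.prod_range_succ, Finset.prod_range_zero, one_mul,
    mul_one, mul_zero, ← pow_succ', Nat.reduceAdd, Nat.reduceMul] at hd h5
  rw [h5] at hd
  have e91 : -q ^ 9 * -q = q ^ 10 := by ring
  have e73 : -q ^ 7 * -q ^ 3 = q ^ 10 := by ring
  have hq10 := hlt (n := 10) (by decide)
  have hpos : 0 < q ^ 10 := by positivity
  have hne : ∀ n : ℕ, -q ^ n ≠ 0 := fun n ↦ neg_ne_zero.2 (pow_ne_zero n h0.ne')
  rw [theta_eq_qPoch (hne 9) (neg_ne_zero.2 h0.ne') (by rwa [e91]) (by rwa [e91]),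
    theta_eq_qPoch (hne 7) (hne 3) (by rwa [e73]) (by rwa [e73]), e91, e73,
    ← fneg_eq_qPoch hpos hq10]
  simp only [neg_neg]
  field_simp at hd ⊢
  linear_combination -hd

/-- The relation between `ψ(q)²` and `qψ(q⁵)²` in terms of `f`. -/
lemma fneg_psi_relation (h0 : 0 < q) (h1 : q < 1) :
    (fneg (q ^ 2) ^ 2 / fneg q) ^ 2 = q * (fneg (q ^ 10) ^ 2 / fneg (q ^ 5)) ^ 2 +
      fneg (q ^ 2) * fneg (q ^ 5) ^ 3 / (fneg q * fneg (q ^ 10)) := by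
  have h := theta_one_sq h0 h1
  rw [theta_one_eq h0 h1, theta_one_eq (pow_pos h0 5) (pow_lt_one₀ h0.le h1 (by decide)),
    theta_mul_theta_five h0 h1, ← pow_mul, show 5 * 2 = 10 by rfl] at h
  linear_combination h / 4

/-- The relation between `φ(-q)²` and `φ(-q⁵)²` in terms of `f`. -/
lemma fneg_phi_relation (h0 : 0 < q) (h1 : q < 1) :
    (fneg q ^ 2 / fneg (q ^ 2)) ^ 2 = (fneg (q ^ 5) ^ 2 / fneg (q ^ 10)) ^ 2 -
      4 * q * (fneg q * fneg (q ^ 10) ^ 3 / (fneg (q ^ 2) * fneg (q ^ 5))) := by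
  have h := theta_self_sq (p := -q) (neg_ne_zero.2 h0.ne') (by rwa [abs_neg, abs_of_pos h0])
  rw [Odd.neg_pow (by decide), Odd.neg_pow (by decide), Odd.neg_pow (by decide),
    Odd.neg_pow (by decide), theta_neg_eq h0 h1,
    theta_neg_eq (pow_pos h0 5) (pow_lt_one₀ h0.le h1 (by decide)),
    theta_mul_theta_ten h0 h1, ← pow_mul, show 5 * 2 = 10 by rfl] at h
  linear_combination h

/-- With `v = ψ(q)² / (qψ(q⁵)²)` one has `v > 1` and `φ(-q)² / φ(-q⁵)² = (v - 5) / (v - 1)`. -/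
lemma level_ten_relation (h0 : 0 < q) (h1 : q < 1) {v u : ℝ}
    (hv : v = fneg (q ^ 2) ^ 4 * fneg (q ^ 5) ^ 2 / (q * fneg q ^ 2 * fneg (q ^ 10) ^ 4))
    (hu : u = fneg q ^ 4 * fneg (q ^ 10) ^ 2 / (fneg (q ^ 2) ^ 2 * fneg (q ^ 5) ^ 4)) :
    1 < v ∧ u * (v - 1) = v - 5 := by
  have hE : ∀ n : ℕ, n ≠ 0 → 0 < fneg (q ^ n) := fun n hn ↦
    fneg_pos (pow_pos h0 n) (pow_lt_one₀ h0.le h1 hn)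
  have hE1 := fneg_pos h0 h1
  have hE2 := hE 2 (by decide)
  have hE5 := hE 5 (by decide)
  have hE10 := hE 10 (by decide)
  have hψ := fneg_psi_relation h0 h1
  have hφ := fneg_phi_relation h0 h1
  generalize fneg q = x1 at *
  generalize fneg (q ^ 2) = x2 at *
  generalize fneg (q ^ 5) = x5 at *
  generalize fneg (q ^ 10) = x10 at *
  have hv1 : v - 1 = x2 * x5 ^ 5 / (q * x1 * x10 ^ 5) := by
    rw [hv]
    field_simp at hψ ⊢
    linear_combination hψ
  have hu1 : u - 1 = -4 * (q * x1 * x10 ^ 5 / (x2 * x5 ^ 5)) := by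
    rw [hu]
    field_simp at hφ ⊢
    linear_combination hφ
  have hprod : (u - 1) * (v - 1) = -4 := by
    rw [hu1, hv1]
    field_simp
  refine ⟨?_, by linear_combination hprod⟩
  have : 0 < v - 1 := by rw [hv1]; positivity
  linarith

/-- The polynomial relation between the level-ten parameters at `q` and at `q²`. -/
lemma parameter_relation {v w x y : ℝ} (hv : 1 < v) (hw : 1 < w) (hx : x * (v - 1) = v - 5)
    (hy : y * (w - 1) = w - 5) (h : v ^ 2 * x = w * y ^ 2) :
    v ^ 2 * w - v ^ 2 - 4 * v * w - w ^ 2 + 5 * w = 0 := by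
  have hpos : 0 < (v - 1) * (w - 1) + 4 := by
    have := mul_pos (sub_pos.2 hv) (sub_pos.2 hw)
    linarith
  refine (mul_eq_zero.1 ?_).resolve_left hpos.ne'
  linear_combination (v - 1) * (w - 1) ^ 2 * h - v ^ 2 * (w - 1) ^ 2 * hx
    + w * (v - 1) * (y * (w - 1) + (w - 5)) * hy

lemma modular_equation_of_parameters {v w a b : ℝ} (hv : 1 < v) (hw : 1 < w) (ha0 : a ≠ 0)
    (hb0 : b ≠ 0) (ha : a = v * (v - 5) / (v - 1)) (hb : b = w * (w - 5) / (w - 1))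
    (h : v ^ 2 * w - v ^ 2 - 4 * v * w - w ^ 2 + 5 * w = 0) :
    (a ^ 2 / b ^ 2 + b ^ 2 / a ^ 2) - 3 * (a / b + b / a) - (a + b) - 25 * (1 / a + 1 / b)
      - 12 = 0 := by
  have hv1 : v - 1 ≠ 0 := (sub_pos.2 hv).ne'
  have hw1 : w - 1 ≠ 0 := (sub_pos.2 hw).ne'
  suffices hpoly : a ^ 4 + b ^ 4 - 3 * (a ^ 3 * b + a * b ^ 3) - (a + b) * a ^ 2 * b ^ 2
      - 25 * (a * b ^ 2 + a ^ 2 * b) - 12 * a ^ 2 * b ^ 2 = 0 by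
    field_simp
    linear_combination hpoly
  refine (mul_eq_zero.1 ?_).resolve_left
    (mul_ne_zero (pow_ne_zero 4 hv1) (pow_ne_zero 4 hw1))
  rw [ha, hb]
  field_simp
  linear_combination ((125 * w ^ 3 - 75 * w ^ 4 + 15 * w ^ 5 - w ^ 6)
    + (-625 * w + 1000 * w ^ 2 - 750 * w ^ 3 + 220 * w ^ 4 - 41 * w ^ 5 + 4 * w ^ 6) * v
    + (-625 + 1875 * w - 1675 * w ^ 2 + 775 * w ^ 3 - 202 * w ^ 4 + 50 * w ^ 5 - 6 * w ^ 6) * v ^ 2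
    + (500 - 950 * w + 580 * w ^ 2 - 276 * w ^ 3 + 116 * w ^ 4 - 38 * w ^ 5 + 4 * w ^ 6) * v ^ 3
    + (-150 + 250 * w - 202 * w ^ 2 + 155 * w ^ 3 - 67 * w ^ 4 + 15 * w ^ 5 - w ^ 6) * v ^ 4
    + (20 - 41 * w + 44 * w ^ 2 - 30 * w ^ 3 + 8 * w ^ 4 - w ^ 5) * v ^ 5
    + (-1 + 3 * w - 3 * w ^ 2 + w ^ 3) * v ^ 6) * h

end EtaQuotients

theorem stmt_5 (q A B₂ P Q : ℝ) (hq0 : 0 < q) (hq1 : q < 1)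
    (hA : A = fneg q * fneg (q ^ 2) /
      (q ^ ((1 : ℝ) / 2) * fneg (q ^ 5) * fneg (q ^ 10)))
    (hB : B₂ = fneg (q ^ 2) * fneg (q ^ 4) /
      (q * fneg (q ^ 10) * fneg (q ^ 20)))
    (hP : P = A * B₂) (hQ : Q = A / B₂) :
    (Q ^ 4 + 1 / Q ^ 4) - 3 * (Q ^ 2 + 1 / Q ^ 2)
      - (P + 5 ^ 2 / P) * (Q + 1 / Q) - 12 = 0 := by
  have hE : ∀ n : ℕ, n ≠ 0 → 0 < fneg (q ^ n) := fun n hn ↦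
    fneg_pos (pow_pos hq0 n) (pow_lt_one₀ hq0.le hq1 hn)
  have hE1 := fneg_pos hq0 hq1
  have hE2 := hE 2 (by decide)
  have hE4 := hE 4 (by decide)
  have hE5 := hE 5 (by decide)
  have hE10 := hE 10 (by decide)
  have hE20 := hE 20 (by decide)
  obtain ⟨hv, hx⟩ := level_ten_relation hq0 hq1 rfl rfl
  obtain ⟨hw, hy⟩ := level_ten_relation (pow_pos hq0 2)
    (pow_lt_one₀ hq0.le hq1 two_ne_zero) rfl rfl
  simp only [← pow_mul, Nat.reduceMul] at hw hy
  have hs0 : 0 < q ^ ((1 : ℝ) / 2) := rpow_pos_of_pos hq0 _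
  have hs : (q ^ ((1 : ℝ) / 2)) ^ 2 = q := by
    rw [← sqrt_eq_rpow, sq_sqrt hq0.le]
  generalize q ^ ((1 : ℝ) / 2) = s at *
  generalize fneg q = x1 at *
  generalize fneg (q ^ 2) = x2 at *
  generalize fneg (q ^ 4) = x4 at *
  generalize fneg (q ^ 5) = x5 at *
  generalize fneg (q ^ 10) = x10 at *
  generalize fneg (q ^ 20) = x20 at *
  have hR := parameter_relation hv hw hx hy (by field_simp)
  have hA0 : 0 < A := by rw [hA]; positivity
  have hB0 : 0 < B₂ := by rw [hB]; positivity
  have key := modular_equation_of_parameters hv hw (a := A ^ 2) (b := B₂ ^ 2) (by positivity)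
    (by positivity) (by
      rw [eq_div_iff (sub_pos.2 hv).ne', ← hx, hA, div_pow, mul_pow (s * x5), mul_pow s, hs]
      field_simp) (by
      rw [eq_div_iff (sub_pos.2 hw).ne', ← hy, hB]
      field_simp) hR
  rw [hP, hQ]
  rw [← key]
  field_simp
  ring
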